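/- arXiv:2108.10627 — 2 statements merged into one kernel-verified Lean document; each statement's English description precedes it below -/
import Mathlib

section
/- Let c > 0, v ∈ ℝ³ with |v|² < c², and p' ∈ ℝ with 0 < p' ≤ c². Define B₁ := c⁴ + 3p'|v|², B₂ := c⁴ + 2c²p' + p'|v|², B₃ := c²(c² + 3p'), B₄ := c²p'(c² − |v|²). Then (B₃ − B₂²/B₁)|v|² + B₄ = p'(c² − |v|²)²(c⁴ − p'|v|²)/(c⁴ + 3p'|v|²), and this quantity is strictly positive. -/
theorem third_eigenvalue_identity (c p' : ℝ) (v : EuclideanSpace ℝ (Fin 3))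
    (hc : 0 < c) (hv : ‖v‖ ^ 2 < c ^ 2) (hp0 : 0 < p') (hpc : p' ≤ c ^ 2) :
    ((c ^ 2 * (c ^ 2 + 3 * p') -
        (c ^ 4 + 2 * c ^ 2 * p' + p' * ‖v‖ ^ 2) ^ 2 / (c ^ 4 + 3 * p' * ‖v‖ ^ 2)) * ‖v‖ ^ 2 +
      c ^ 2 * p' * (c ^ 2 - ‖v‖ ^ 2)) =
      p' * (c ^ 2 - ‖v‖ ^ 2) ^ 2 * (c ^ 4 - p' * ‖v‖ ^ 2) / (c ^ 4 + 3 * p' * ‖v‖ ^ 2) ∧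
    0 < p' * (c ^ 2 - ‖v‖ ^ 2) ^ 2 * (c ^ 4 - p' * ‖v‖ ^ 2) / (c ^ 4 + 3 * p' * ‖v‖ ^ 2) := by
  have hD : 0 < c ^ 4 + 3 * p' * ‖v‖ ^ 2 := by positivity
  have hN : 0 < c ^ 4 - p' * ‖v‖ ^ 2 := by
    have h1 : p' * ‖v‖ ^ 2 < p' * c ^ 2 := mul_lt_mul_of_pos_left hv hp0
    have h2 : p' * c ^ 2 ≤ c ^ 2 * c ^ 2 := mul_le_mul_of_nonneg_right hpc (by positivity)
    nlinarith
  have hS : 0 < c ^ 2 - ‖v‖ ^ 2 := sub_pos.mpr hv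
  refine ⟨?_, by positivity⟩
  rw [eq_div_iff hD.ne', add_mul, mul_right_comm, sub_mul, div_mul_cancel₀ _ hD.ne']
  ring
end

section
/- Let c > 0 and Φ : D → (0,∞) be C¹ with Φ' < 0 on an open interval D. Then the map w(ρ,v) = (−c³Φ(ρ)/√(c² − |v|²) + c², cΦ(ρ)v/√(c² − |v|²)) is a C¹ diffeomorphism from the open set Ω := D × {v ∈ ℝ³ : |v|² < c²} onto its image w(Ω). -/
lemma aux_inv (D : Set ℝ) (hD : IsOpen D)
    (hDi : D.OrdConnected) (Φ Φ' : ℝ → ℝ)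
    (hΦd : ∀ ρ ∈ D, HasDerivAt Φ (Φ' ρ) ρ)
    (hΦ'c : ContinuousOn Φ' D)
    (hΦ'neg : ∀ ρ ∈ D, Φ' ρ < 0) :
    ContDiffOn ℝ 1 Φ D ∧ IsOpen (Φ '' D) ∧ ∃ Ψ : ℝ → ℝ, ContDiffOn ℝ 1 Ψ (Φ '' D) ∧
      (∀ x ∈ D, Ψ (Φ x) = x) := by
  have hC : ContDiffOn ℝ 1 Φ D := by
    rw [show (1 : WithTop ℕ∞) = 0 + 1 by simp, contDiffOn_succ_iff_deriv_of_isOpen hD]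
    refine ⟨fun x hx => (hΦd x hx).differentiableAt.differentiableWithinAt, by simp, ?_⟩
    rw [contDiffOn_zero]
    exact hΦ'c.congr fun x hx => (hΦd x hx).deriv
  have hinj : Set.InjOn Φ D := by
    apply StrictAntiOn.injOn
    apply strictAntiOn_of_deriv_neg hDi.convex hC.continuousOn
    intro x hx
    have hx' := interior_subset hx
    rw [(hΦd x hx').deriv]
    exact hΦ'neg x hx'
  have hA : ∀ x ∈ D, ContDiffAt ℝ 1 Φ x := fun x hx => hC.contDiffAt (hD.mem_nhds hx)
  have hl : ∀ x ∈ D, Function.invFunOn Φ D (Φ x) = x := fun x hx => hinj.leftInvOn_invFunOn hx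
  have hS : ∀ x ∈ D, HasStrictDerivAt Φ (Φ' x) x := fun x hx =>
    (hA x hx).hasStrictDerivAt' (hΦd x hx) (by simp)
  refine ⟨hC, ?_, Function.invFunOn Φ D, ?_, hl⟩
  · rw [isOpen_iff_mem_nhds]
    rintro _ ⟨x, hx, rfl⟩
    rw [← (hS x hx).map_nhds_eq (hΦ'neg x hx).ne]
    exact Filter.image_mem_map (hD.mem_nhds hx)
  · rintro _ ⟨x, hx, rfl⟩
    apply ContDiffAt.contDiffWithinAt
    have hf := ((hS x hx).hasStrictFDerivAt_equiv (hΦ'neg x hx).ne).hasFDerivAt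
    have h1 := (hA x hx).to_localInverse hf (by simp)
    have hs := (hA x hx).hasStrictFDerivAt' hf (by simp)
    refine h1.congr_of_eventuallyEq ?_
    have h2 := hs.eventually_right_inverse
    have h3 := hs.localInverse_tendsto.eventually (hD.mem_nhds hx)
    filter_upwards [h2, h3] with y hy hy'
    have := hl _ hy'
    rw [hy] at this
    exact this

theorem w_global_diffeomorphism (c : ℝ) (hc : 0 < c) (D : Set ℝ) (hD : IsOpen D)
    (hDi : D.OrdConnected) (Φ Φ' : ℝ → ℝ)
    (hΦpos : ∀ ρ ∈ D, 0 < Φ ρ)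
    (hΦd : ∀ ρ ∈ D, HasDerivAt Φ (Φ' ρ) ρ)
    (hΦ'c : ContinuousOn Φ' D)
    (hΦ'neg : ∀ ρ ∈ D, Φ' ρ < 0) :
    ∀ W : ℝ × (Fin 3 → ℝ) → ℝ × (Fin 3 → ℝ), ∀ Ω : Set (ℝ × (Fin 3 → ℝ)),
    W = (fun z =>
        ((-(c ^ 3 * Φ z.1) / Real.sqrt (c ^ 2 - ∑ k, z.2 k ^ 2) + c ^ 2 : ℝ),
         (fun k : Fin 3 => c * Φ z.1 * z.2 k / Real.sqrt (c ^ 2 - ∑ k, z.2 k ^ 2)))) →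
    Ω = D ×ˢ {v : Fin 3 → ℝ | ∑ k, v k ^ 2 < c ^ 2} →
    ContDiffOn ℝ 1 W Ω ∧ Set.InjOn W Ω ∧ IsOpen (W '' Ω) ∧
    ∃ g : ℝ × (Fin 3 → ℝ) → ℝ × (Fin 3 → ℝ),
      ContDiffOn ℝ 1 g (W '' Ω) ∧
      (∀ z ∈ Ω, g (W z) = z) ∧ (∀ y ∈ W '' Ω, W (g y) = y) := by
  intro W Ω hW hΩ
  obtain ⟨hC, hO, Ψ, hΨ, hl⟩ := aux_inv D hD hDi Φ Φ' hΦd hΦ'c hΦ'neg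
  let V : ℝ × (Fin 3 → ℝ) → (Fin 3 → ℝ) := fun y k => c ^ 2 * y.2 k / (c ^ 2 - y.1)
  let s : (Fin 3 → ℝ) → ℝ := fun v => c ^ 2 - ∑ k, v k ^ 2
  let F : ℝ × (Fin 3 → ℝ) → ℝ := fun y => (c ^ 2 - y.1) * Real.sqrt (s (V y)) / c ^ 3
  let g : ℝ × (Fin 3 → ℝ) → ℝ × (Fin 3 → ℝ) := fun y => (Ψ (F y), V y)
  let U1 : Set (ℝ × (Fin 3 → ℝ)) := {y | y.1 < c ^ 2}
  have hsC : ContDiff ℝ 1 s := by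
    simp only [s]; fun_prop
  have hVW : ∀ z ∈ Ω, V (W z) = z.2 ∧ F (W z) = Φ z.1 ∧ W z ∈ U1 := by
    rintro ⟨ρ, v⟩ hz
    rw [hΩ] at hz
    obtain ⟨hρ, hv⟩ := hz
    have hp := hΦpos ρ hρ
    have hs : 0 < Real.sqrt (c ^ 2 - ∑ k, v k ^ 2) := Real.sqrt_pos.2 (sub_pos.2 hv)
    have hV : V (W (ρ, v)) = v := by
      funext k
      simp only [V, hW]
      generalize Real.sqrt (c ^ 2 - ∑ k, v k ^ 2) = t at *
      have : c ^ 2 - (-(c ^ 3 * Φ ρ) / t + c ^ 2) = c ^ 3 * Φ ρ / t := by ring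
      rw [this]
      field_simp
    refine ⟨hV, ?_, ?_⟩
    · simp only [F, hV, s]
      simp only [hW]
      generalize Real.sqrt (c ^ 2 - ∑ k, v k ^ 2) = t at *
      field_simp
      ring
    · simp only [U1, hW, Set.mem_ofPred_eq]
      have : 0 < c ^ 3 * Φ ρ / Real.sqrt (c ^ 2 - ∑ k, v k ^ 2) := by positivity
      rw [neg_div]
      linarith
  have hgW : ∀ z ∈ Ω, g (W z) = z := by
    intro z hz
    obtain ⟨h1, h2, h3⟩ := hVW z hz
    rw [hΩ] at hz
    simp only [g, h1, h2, hl _ hz.1]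
  have hVC : ContDiffOn ℝ 1 V U1 := by
    rw [contDiffOn_pi]
    intro k
    apply ContDiffOn.div (by fun_prop) (by fun_prop)
    intro y hy
    exact (sub_pos.2 hy).ne'
  have hU1 : IsOpen U1 := isOpen_lt continuous_fst continuous_const
  let U2 : Set (ℝ × (Fin 3 → ℝ)) := U1 ∩ V ⁻¹' {v | ∑ k, v k ^ 2 < c ^ 2}
  have hU2 : IsOpen U2 := by
    apply hVC.continuousOn.isOpen_inter_preimage hU1
    exact isOpen_lt (by fun_prop) continuous_const
  have hFC : ContDiffOn ℝ 1 F U2 := by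
    have h1 : ContDiffOn ℝ 1 (fun y => Real.sqrt (s (V y))) U2 := by
      apply ContDiffOn.sqrt
      · exact hsC.comp_contDiffOn (hVC.mono Set.inter_subset_left)
      · intro y hy
        exact (sub_pos.2 hy.2).ne'
    exact ((by fun_prop : ContDiffOn ℝ 1 (fun y : ℝ × (Fin 3 → ℝ) => c ^ 2 - y.1) U2).mul h1).div_const _
  have himg : W '' Ω = U2 ∩ F ⁻¹' (Φ '' D) := by
    apply Set.Subset.antisymm
    · rintro _ ⟨z, hz, rfl⟩
      obtain ⟨h1, h2, h3⟩ := hVW z hz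
      rw [hΩ] at hz
      refine ⟨⟨h3, ?_⟩, ?_⟩
      · rw [Set.mem_preimage, h1]; exact hz.2
      · rw [Set.mem_preimage, h2]; exact ⟨_, hz.1, rfl⟩
    · rintro y ⟨⟨h1, h2⟩, ρ, hρ, h3⟩
      refine ⟨(ρ, V y), by rw [hΩ]; exact ⟨hρ, h2⟩, ?_⟩
      have hs : 0 < Real.sqrt (s (V y)) := Real.sqrt_pos.2 (sub_pos.2 h2)
      have h1' : 0 < c ^ 2 - y.1 := sub_pos.2 h1
      have e : W (ρ, V y) = (-(c ^ 3 * Φ ρ) / Real.sqrt (s (V y)) + c ^ 2,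
         fun k : Fin 3 => c * Φ ρ * V y k / Real.sqrt (s (V y))) := by rw [hW]
      rw [e, h3]
      simp only [F]
      generalize Real.sqrt (s (V y)) = t at *
      ext k
      · simp only
        field_simp
        ring
      · simp only [V]
        field_simp
  have hopen : IsOpen (W '' Ω) := by
    rw [himg]
    exact hFC.continuousOn.isOpen_inter_preimage hU2 hO
  refine ⟨?_, ?_, hopen, g, ?_, hgW, ?_⟩
  · have hs : ContDiffOn ℝ 1 (fun z : ℝ × (Fin 3 → ℝ) => Real.sqrt (c ^ 2 - ∑ k, z.2 k ^ 2)) Ω := by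
      apply ContDiffOn.sqrt
      · fun_prop
      · intro z hz
        rw [hΩ] at hz
        exact (sub_pos.2 hz.2).ne'
    have hs0 : ∀ z ∈ Ω, Real.sqrt (c ^ 2 - ∑ k, z.2 k ^ 2) ≠ 0 := by
      intro z hz
      rw [hΩ] at hz
      exact (Real.sqrt_pos.2 (sub_pos.2 hz.2)).ne'
    have hP : ContDiffOn ℝ 1 (fun z : ℝ × (Fin 3 → ℝ) => Φ z.1) Ω := by
      apply hC.comp contDiff_fst.contDiffOn
      intro z hz
      rw [hΩ] at hz
      exact hz.1
    rw [hW]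
    apply ContDiffOn.prodMk
    · exact ((contDiffOn_const.mul hP).neg.div hs hs0).add contDiffOn_const
    · rw [contDiffOn_pi]
      intro k
      exact ((contDiffOn_const.mul hP).mul (by fun_prop)).div hs hs0
  · intro a ha b hb h
    rw [← hgW a ha, ← hgW b hb, h]
  · rw [himg]
    apply ContDiffOn.prodMk
    · exact hΨ.comp (hFC.mono Set.inter_subset_left) fun y hy => hy.2
    · exact hVC.mono fun y hy => hy.1.1
  · rintro _ ⟨z, hz, rfl⟩
    rw [hgW z hz]
end
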